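/- For each n ≥ 1, there exists no provability predicate PR_T(x) of T such that N⁺A_{0,n} ⊆ PL(PR_T). -/

import Mathlib

namespace PLN

/-! ### Modal formulas and the logics N⁺A_{m,n} -/

/-- Formulas of modal propositional logic. -/
inductive MFml : Type
  | var : ℕ → MFml
  | bot : MFml
  | neg : MFml → MFml
  | and : MFml → MFml → MFml
  | or : MFml → MFml → MFml
  | imp : MFml → MFml → MFml
  | box : MFml → MFml
  deriving DecidableEq

/-- `boxIter n A` is `□ⁿ A`, where `□⁰ A = A` and `□^(k+1) A = □ (□ᵏ A)`. -/
def boxIter : ℕ → MFml → MFml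
  | 0, A => A
  | k + 1, A => .box (boxIter k A)

/-- Evaluation of a modal formula under a valuation of its "propositional atoms"
(propositional variables, and boxed formulas); used to define propositional tautologies
in the modal language. -/
def MFml.evalTC (v : MFml → Prop) : MFml → Prop
  | .bot => False
  | .neg A => ¬ A.evalTC v
  | .and A B => A.evalTC v ∧ B.evalTC v
  | .or A B => A.evalTC v ∨ B.evalTC v
  | .imp A B => A.evalTC v → B.evalTC v
  | A => v A

/-- Propositional tautologies in the modal language. -/
def MTaut (A : MFml) : Prop := ∀ v, A.evalTC v

/-- Provability in the logic `N⁺A_{m,n}`: the pure logic of necessitation `N`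
(propositional tautologies, modus ponens, necessitation) together with the axiom scheme
`□ⁿA → □ᵐA` and the rule `Ros□` (from `¬□A` infer `¬□□A`). -/
inductive NAProves (m n : ℕ) : MFml → Prop
  | taut {A} : MTaut A → NAProves m n A
  | acc (A) : NAProves m n (.imp (boxIter n A) (boxIter m A))
  | mp {A B} : NAProves m n (.imp A B) → NAProves m n A → NAProves m n B
  | nec {A} : NAProves m n A → NAProves m n (.box A)
  | ros {A} : NAProves m n (.neg (.box A)) → NAProves m n (.neg (.box (.box A)))

/-- `IsSub B A` : `B` is a subformula of `A`. -/
inductive IsSub : MFml → MFml → Prop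
  | refl (A) : IsSub A A
  | neg {B A} : IsSub B A → IsSub B (.neg A)
  | andL {B A C} : IsSub B A → IsSub B (.and A C)
  | andR {B A C} : IsSub B C → IsSub B (.and A C)
  | orL {B A C} : IsSub B A → IsSub B (.or A C)
  | orR {B A C} : IsSub B C → IsSub B (.or A C)
  | impL {B A C} : IsSub B A → IsSub B (.imp A C)
  | impR {B A C} : IsSub B C → IsSub B (.imp A C)
  | box {B A} : IsSub B A → IsSub B (.box A)

/-! ### N-frames and N-models -/

/-- An N-model on a set `W` of worlds: an N-frame (a binary relation `≺_B` on `W`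
for each modal formula `B`) together with a valuation of propositional variables. -/
structure NModel (W : Type) where
  rel : MFml → W → W → Prop
  val : W → ℕ → Prop

/-- The forcing relation of an N-model:
`x ⊩ □B` iff every `y` with `x ≺_B y` satisfies `y ⊩ B`. -/
def NModel.Forces {W : Type} (M : NModel W) : W → MFml → Prop
  | x, .var p => M.val x p
  | _, .bot => False
  | x, .neg A => ¬ NModel.Forces M x A
  | x, .and A B => NModel.Forces M x A ∧ NModel.Forces M x B
  | x, .or A B => NModel.Forces M x A ∨ NModel.Forces M x B
  | x, .imp A B => NModel.Forces M x A → NModel.Forces M x B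
  | x, .box A => ∀ y, M.rel A x y → NModel.Forces M y A

/-- The relations `≺_B^k` : `x ≺_B^0 y` iff `x = y`, and
`x ≺_B^(k+1) y` iff `∃ w, x ≺_{□ᵏB} w` and `w ≺_B^k y`. -/
def NModel.relIter {W : Type} (M : NModel W) (B : MFml) : ℕ → W → W → Prop
  | 0, x, y => x = y
  | k + 1, x, y => ∃ w, M.rel (boxIter k B) x w ∧ NModel.relIter M B k w y

/-- `(m,n)`-accessibility of (the frame of) an N-model. -/
def NModel.Accessible {W : Type} (M : NModel W) (m n : ℕ) : Prop :=
  ∀ (B : MFml) (x y : W), NModel.relIter M B m x y → NModel.relIter M B n x y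

/-! ### The language of first-order arithmetic -/

/-- Terms of the language of arithmetic, with de Bruijn variables. -/
inductive ATerm : Type
  | var : ℕ → ATerm
  | zero : ATerm
  | succ : ATerm → ATerm
  | add : ATerm → ATerm → ATerm
  | mul : ATerm → ATerm → ATerm
  deriving DecidableEq

/-- Formulas of the language of arithmetic (with `≤` primitive), de Bruijn variables. -/
inductive AFml : Type
  | eq : ATerm → ATerm → AFml
  | le : ATerm → ATerm → AFml
  | neg : AFml → AFml
  | and : AFml → AFml → AFml
  | or : AFml → AFml → AFml
  | imp : AFml → AFml → AFml
  | all : AFml → AFml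
  | ex : AFml → AFml
  deriving DecidableEq

/-- Lift (shift up by one) the variables `≥ c` of a term. -/
def ATerm.lift (c : ℕ) : ATerm → ATerm
  | .var n => .var (if n < c then n else n + 1)
  | .zero => .zero
  | .succ t => .succ (t.lift c)
  | .add t s => .add (t.lift c) (s.lift c)
  | .mul t s => .mul (t.lift c) (s.lift c)

/-- Simultaneous substitution in terms. -/
def ATerm.substAll (σ : ℕ → ATerm) : ATerm → ATerm
  | .var n => σ n
  | .zero => .zero
  | .succ t => .succ (t.substAll σ)
  | .add t s => .add (t.substAll σ) (s.substAll σ)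
  | .mul t s => .mul (t.substAll σ) (s.substAll σ)

/-- Pushing a substitution under a binder. -/
def liftSub (σ : ℕ → ATerm) : ℕ → ATerm
  | 0 => .var 0
  | n + 1 => (σ n).lift 0

/-- Lift (shift up by one) the free variables `≥ c` of a formula. -/
def AFml.lift (c : ℕ) : AFml → AFml
  | .eq t s => .eq (t.lift c) (s.lift c)
  | .le t s => .le (t.lift c) (s.lift c)
  | .neg φ => .neg (φ.lift c)
  | .and φ ψ => .and (φ.lift c) (ψ.lift c)
  | .or φ ψ => .or (φ.lift c) (ψ.lift c)
  | .imp φ ψ => .imp (φ.lift c) (ψ.lift c)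
  | .all φ => .all (φ.lift (c + 1))
  | .ex φ => .ex (φ.lift (c + 1))

/-- Simultaneous (capture-avoiding) substitution in formulas. -/
def AFml.substAll (σ : ℕ → ATerm) : AFml → AFml
  | .eq t s => .eq (t.substAll σ) (s.substAll σ)
  | .le t s => .le (t.substAll σ) (s.substAll σ)
  | .neg φ => .neg (φ.substAll σ)
  | .and φ ψ => .and (φ.substAll σ) (ψ.substAll σ)
  | .or φ ψ => .or (φ.substAll σ) (ψ.substAll σ)
  | .imp φ ψ => .imp (φ.substAll σ) (ψ.substAll σ)
  | .all φ => .all (φ.substAll (liftSub σ))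
  | .ex φ => .ex (φ.substAll (liftSub σ))

def subst0Env (t : ATerm) : ℕ → ATerm
  | 0 => t
  | n + 1 => .var n

def subst2Env (t s : ATerm) : ℕ → ATerm
  | 0 => t
  | 1 => s
  | n + 2 => .var n

/-- Substitute the term `t` for the free variable `0` (decrementing other variables). -/
def AFml.subst0 (φ : AFml) (t : ATerm) : AFml := φ.substAll (subst0Env t)

/-- Substitute the terms `t`, `s` for the free variables `0`, `1` simultaneously. -/
def AFml.subst2 (φ : AFml) (t s : ATerm) : AFml := φ.substAll (subst2Env t s)

/-- Substitute `S(var 0)` for `var 0`, leaving all other free variables unchanged. -/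
def succSubst (φ : AFml) : AFml :=
  φ.substAll fun n => if n = 0 then .succ (.var 0) else .var n

/-- All variables of a term are `< c`. -/
def ATerm.FreeLt (c : ℕ) : ATerm → Prop
  | .var n => n < c
  | .zero => True
  | .succ t => t.FreeLt c
  | .add t s => t.FreeLt c ∧ s.FreeLt c
  | .mul t s => t.FreeLt c ∧ s.FreeLt c

/-- All free variables of a formula are `< c`; `FreeLt 0 φ` says that `φ` is a sentence. -/
def AFml.FreeLt (c : ℕ) : AFml → Prop
  | .eq t s => t.FreeLt c ∧ s.FreeLt c
  | .le t s => t.FreeLt c ∧ s.FreeLt c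
  | .neg φ => φ.FreeLt c
  | .and φ ψ => φ.FreeLt c ∧ ψ.FreeLt c
  | .or φ ψ => φ.FreeLt c ∧ ψ.FreeLt c
  | .imp φ ψ => φ.FreeLt c ∧ ψ.FreeLt c
  | .all φ => φ.FreeLt (c + 1)
  | .ex φ => φ.FreeLt (c + 1)

/-- The numeral `n̄`. -/
def numeral : ℕ → ATerm
  | 0 => .zero
  | n + 1 => .succ (numeral n)

/-- A Gödel numbering of terms. -/
def ATerm.code : ATerm → ℕ
  | .var n => Nat.pair 0 n
  | .zero => Nat.pair 1 0
  | .succ t => Nat.pair 2 t.code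
  | .add t s => Nat.pair 3 (Nat.pair t.code s.code)
  | .mul t s => Nat.pair 4 (Nat.pair t.code s.code)

/-- A Gödel numbering of formulas. -/
def AFml.code : AFml → ℕ
  | .eq t s => Nat.pair 0 (Nat.pair t.code s.code)
  | .le t s => Nat.pair 1 (Nat.pair t.code s.code)
  | .neg φ => Nat.pair 2 φ.code
  | .and φ ψ => Nat.pair 3 (Nat.pair φ.code ψ.code)
  | .or φ ψ => Nat.pair 4 (Nat.pair φ.code ψ.code)
  | .imp φ ψ => Nat.pair 5 (Nat.pair φ.code ψ.code)
  | .all φ => Nat.pair 6 φ.code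
  | .ex φ => Nat.pair 7 φ.code

/-- `⌜φ⌝`, the numeral of the Gödel number of `φ`. -/
def gnum (φ : AFml) : ATerm := numeral φ.code

/-- For a formula `P(x)` (with free variable `var 0`), `P.appNum φ` is `P(⌜φ⌝)`. -/
def AFml.appNum (P φ : AFml) : AFml := P.subst0 (gnum φ)

/-- Iterated application of a predicate: `iterPred P k φ = P(⌜P(⌜⋯P(⌜φ⌝)⋯⌝)⌝)` (`k` times). -/
def iterPred (P : AFml) : ℕ → AFml → AFml
  | 0, φ => φ
  | k + 1, φ => P.appNum (iterPred P k φ)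

/-! ### Satisfaction in the standard model -/

def ATerm.val (ρ : ℕ → ℕ) : ATerm → ℕ
  | .var n => ρ n
  | .zero => 0
  | .succ t => t.val ρ + 1
  | .add t s => t.val ρ + s.val ρ
  | .mul t s => t.val ρ * s.val ρ

def consEnv (a : ℕ) (ρ : ℕ → ℕ) : ℕ → ℕ
  | 0 => a
  | n + 1 => ρ n

/-- Satisfaction in the standard model `ℕ` under an environment `ρ`. -/
def AFml.Sat (ρ : ℕ → ℕ) : AFml → Prop
  | .eq t s => t.val ρ = s.val ρ
  | .le t s => t.val ρ ≤ s.val ρ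
  | .neg φ => ¬ φ.Sat ρ
  | .and φ ψ => φ.Sat ρ ∧ ψ.Sat ρ
  | .or φ ψ => φ.Sat ρ ∨ ψ.Sat ρ
  | .imp φ ψ => φ.Sat ρ → ψ.Sat ρ
  | .all φ => ∀ a, φ.Sat (consEnv a ρ)
  | .ex φ => ∃ a, φ.Sat (consEnv a ρ)

/-- `ℕ ⊨ φ`. -/
def TrueN (φ : AFml) : Prop := φ.Sat fun _ => 0

/-! ### The arithmetical hierarchy: Δ₀, Σ₁, Π₁ -/

/-- `Δ₀` formulas: every quantifier is bounded. -/
inductive IsDelta0 : AFml → Prop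
  | eq (t s : ATerm) : IsDelta0 (.eq t s)
  | le (t s : ATerm) : IsDelta0 (.le t s)
  | neg {φ} : IsDelta0 φ → IsDelta0 (.neg φ)
  | and {φ ψ} : IsDelta0 φ → IsDelta0 ψ → IsDelta0 (.and φ ψ)
  | or {φ ψ} : IsDelta0 φ → IsDelta0 ψ → IsDelta0 (.or φ ψ)
  | imp {φ ψ} : IsDelta0 φ → IsDelta0 ψ → IsDelta0 (.imp φ ψ)
  | ball {φ : AFml} (t : ATerm) : IsDelta0 φ → IsDelta0 (.all (.imp (.le (.var 0) (ATerm.lift 0 t)) φ))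
  | bex {φ : AFml} (t : ATerm) : IsDelta0 φ → IsDelta0 (.ex (.and (.le (.var 0) (ATerm.lift 0 t)) φ))

mutual
  /-- `Σ₁` formulas. -/
  inductive IsSigma1 : AFml → Prop
    | delta0 {φ} : IsDelta0 φ → IsSigma1 φ
    | and {φ ψ} : IsSigma1 φ → IsSigma1 ψ → IsSigma1 (.and φ ψ)
    | or {φ ψ} : IsSigma1 φ → IsSigma1 ψ → IsSigma1 (.or φ ψ)
    | ex {φ} : IsSigma1 φ → IsSigma1 (.ex φ)
    | negPi {φ} : IsPi1 φ → IsSigma1 (.neg φ)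
    | impPiSigma {φ ψ} : IsPi1 φ → IsSigma1 ψ → IsSigma1 (.imp φ ψ)
  /-- `Π₁` formulas. -/
  inductive IsPi1 : AFml → Prop
    | delta0 {φ} : IsDelta0 φ → IsPi1 φ
    | and {φ ψ} : IsPi1 φ → IsPi1 ψ → IsPi1 (.and φ ψ)
    | or {φ ψ} : IsPi1 φ → IsPi1 ψ → IsPi1 (.or φ ψ)
    | all {φ} : IsPi1 φ → IsPi1 (.all φ)
    | negSigma {φ} : IsSigma1 φ → IsPi1 (.neg φ)
    | impSigmaPi {φ ψ} : IsSigma1 φ → IsPi1 ψ → IsPi1 (.imp φ ψ)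
end

/-! ### A Hilbert-style proof system for first-order arithmetic -/

/-- Evaluation of an arithmetical formula under a valuation of its "propositionally atomic"
subformulas (atomic or quantified formulas); used for propositional tautologies and
tautological consequence. -/
def AFml.evalProp (v : AFml → Prop) : AFml → Prop
  | .neg φ => ¬ φ.evalProp v
  | .and φ ψ => φ.evalProp v ∧ ψ.evalProp v
  | .or φ ψ => φ.evalProp v ∨ ψ.evalProp v
  | .imp φ ψ => φ.evalProp v → ψ.evalProp v
  | φ => v φ

/-- Propositional tautologies in the language of arithmetic. -/
def ATaut (φ : AFml) : Prop := ∀ v, φ.evalProp v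

/-- `φ` is a tautological consequence of the set `X` of formulas. -/
def TC (X : Set AFml) (φ : AFml) : Prop :=
  ∀ v : AFml → Prop, (∀ ψ ∈ X, ψ.evalProp v) → φ.evalProp v

def iffF (φ ψ : AFml) : AFml := .and (.imp φ ψ) (.imp ψ φ)

/-- Hilbert-style provability from the set of axioms `Γ` in classical first-order
logic with equality. -/
inductive Proves (Γ : Set AFml) : AFml → Prop
  | ax {φ} : φ ∈ Γ → Proves Γ φ
  | taut {φ} : ATaut φ → Proves Γ φ
  | mp {φ ψ} : Proves Γ (.imp φ ψ) → Proves Γ φ → Proves Γ ψ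
  | allE (φ : AFml) (t : ATerm) : Proves Γ (.imp (.all φ) (φ.subst0 t))
  | exI (φ : AFml) (t : ATerm) : Proves Γ (.imp (φ.subst0 t) (.ex φ))
  | allImp (φ ψ : AFml) : Proves Γ (.imp (.all (.imp φ ψ)) (.imp (.all φ) (.all ψ)))
  | vacAll (φ : AFml) : Proves Γ (.imp φ (.all (AFml.lift 0 φ)))
  | exDef (φ : AFml) : Proves Γ (iffF (.ex φ) (.neg (.all (.neg φ))))
  | gen {φ} : Proves Γ φ → Proves Γ (.all φ)
  | eqRefl (t : ATerm) : Proves Γ (.eq t t)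
  | eqSubst (φ : AFml) (t s : ATerm) : Proves Γ (.imp (.eq t s) (.imp (φ.subst0 t) (φ.subst0 s)))

/-! ### Peano arithmetic -/

/-- The axioms of Peano arithmetic. -/
inductive PAax : AFml → Prop
  | succNeZero : PAax (.all (.neg (.eq (.succ (.var 0)) .zero)))
  | succInj :
      PAax (.all (.all (.imp (.eq (.succ (.var 1)) (.succ (.var 0))) (.eq (.var 1) (.var 0)))))
  | addZero : PAax (.all (.eq (.add (.var 0) .zero) (.var 0)))
  | addSucc :
      PAax (.all (.all (.eq (.add (.var 1) (.succ (.var 0))) (.succ (.add (.var 1) (.var 0))))))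
  | mulZero : PAax (.all (.eq (.mul (.var 0) .zero) .zero))
  | mulSucc :
      PAax (.all (.all (.eq (.mul (.var 1) (.succ (.var 0)))
        (.add (.mul (.var 1) (.var 0)) (.var 1)))))
  | leDef :
      PAax (.all (.all (iffF (.le (.var 1) (.var 0))
        (.ex (.eq (.add (.var 0) (.var 2)) (.var 1))))))
  | ind (φ : AFml) :
      PAax (.imp (.and (φ.subst0 .zero) (.all (.imp φ (succSubst φ)))) (.all φ))

/-- Peano arithmetic, as a set of axioms. -/
def PA : Set AFml := {φ | PAax φ}

/-- The sentence `0 = 1`. -/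
def botFml : AFml := .eq .zero (.succ .zero)

/-- `t < s`, as the formula `S(t) ≤ s`. -/
def ltF (t s : ATerm) : AFml := .le (.succ t) s

/-- `Δ₁(PA)` formulas: `Σ₁` formulas which are `PA`-provably equivalent to a `Π₁` formula. -/
def IsDelta1PA (φ : AFml) : Prop :=
  IsSigma1 φ ∧ ∃ ψ, IsPi1 ψ ∧ Proves PA (iffF φ ψ)

/-! ### Theories, provability predicates, arithmetical interpretations -/

/-- `Tax` is primitive recursively axiomatized (via the Gödel numbering). -/
def PrAxiomatized (Tax : Set AFml) : Prop :=
  ∃ p : ℕ → Bool, Primrec p ∧ ∀ φ : AFml, φ ∈ Tax ↔ p φ.code = true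

/-- `Σ₁`-soundness: every `T`-provable `Σ₁` sentence is true in `ℕ`. -/
def Sigma1Sound (Tax : Set AFml) : Prop :=
  ∀ φ : AFml, IsSigma1 φ → φ.FreeLt 0 → Proves Tax φ → TrueN φ

/-- `P` is a provability predicate of `T`: a formula `P(x)` with at most the free
variable `x` such that for every formula `φ`, `T ⊢ φ` iff `PA ⊢ P(⌜φ⌝)`. -/
def IsProvPred (Tax : Set AFml) (P : AFml) : Prop :=
  P.FreeLt 1 ∧ ∀ φ : AFml, Proves Tax φ ↔ Proves PA (P.appNum φ)

/-- `f` is an arithmetical interpretation based on the predicate `P`. -/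
def IsInterp (P : AFml) (f : MFml → AFml) : Prop :=
  (∀ i, (f (.var i)).FreeLt 0) ∧
  f .bot = botFml ∧
  (∀ A, f (.neg A) = .neg (f A)) ∧
  (∀ A B, f (.and A B) = .and (f A) (f B)) ∧
  (∀ A B, f (.or A B) = .or (f A) (f B)) ∧
  (∀ A B, f (.imp A B) = .imp (f A) (f B)) ∧
  (∀ A, f (.box A) = P.appNum (f A))

/-- The provability logic of the predicate `P` (relative to the theory `Tax`). -/
def PL (Tax : Set AFml) (P : AFml) : Set MFml :=
  {A | ∀ f : MFml → AFml, IsInterp P f → Proves Tax (f A)}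

/-- The formulas with a `T`-proof of code `≤ s` (relative to a proof enumeration `prf`). -/
def PTset (prf : ℕ → Option AFml) (s : ℕ) : Set AFml :=
  {φ | ∃ y ≤ s, prf y = some φ}

/-! ### Substitution theory -/

def shiftV (c : ℕ) : ℕ → ATerm := fun n => .var (if n < c then n else n + 1)

theorem tlift_eq (c : ℕ) (t : ATerm) : t.lift c = t.substAll (shiftV c) := by
  induction t <;> simp_all [ATerm.lift, ATerm.substAll, shiftV]

theorem tcomp (σ τ : ℕ → ATerm) (t : ATerm) :
    (t.substAll σ).substAll τ = t.substAll (fun n => (σ n).substAll τ) := by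
  induction t <;> simp_all [ATerm.substAll]

theorem tsub_id (t : ATerm) : t.substAll ATerm.var = t := by
  induction t <;> simp_all [ATerm.substAll]

theorem lift_liftSub (τ : ℕ → ATerm) (t : ATerm) :
    (t.lift 0).substAll (liftSub τ) = (t.substAll τ).lift 0 := by
  rw [tlift_eq, tlift_eq, tcomp, tcomp]
  congr 1; funext n
  simp [shiftV, ATerm.substAll, liftSub, tlift_eq]

theorem lift_subst0 (s t : ATerm) : (t.lift 0).substAll (subst0Env s) = t := by
  rw [tlift_eq, tcomp]
  conv_rhs => rw [← tsub_id t]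
  congr 1

theorem liftSub_comp (σ τ : ℕ → ATerm) :
    (fun n => (liftSub σ n).substAll (liftSub τ)) = liftSub (fun n => (σ n).substAll τ) := by
  funext n
  cases n with
  | zero => rfl
  | succ n => simp only [liftSub]; exact lift_liftSub τ _

theorem liftSub_id : liftSub ATerm.var = ATerm.var := by
  funext n
  cases n with
  | zero => rfl
  | succ n => simp [liftSub, ATerm.lift]

theorem fsub_id (φ : AFml) : φ.substAll ATerm.var = φ := by
  induction φ <;> simp_all [AFml.substAll, liftSub_id, tsub_id]

theorem fcomp (φ : AFml) : ∀ (σ τ : ℕ → ATerm),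
    (φ.substAll σ).substAll τ = φ.substAll (fun n => (σ n).substAll τ) := by
  induction φ <;> intro σ τ <;> simp_all [AFml.substAll, tcomp, liftSub_comp]

theorem liftSub_shift (c : ℕ) : liftSub (shiftV c) = shiftV (c + 1) := by
  funext n
  cases n with
  | zero => simp [liftSub, shiftV]
  | succ n => simp only [liftSub, shiftV, ATerm.lift]; split_ifs <;> simp_all <;> omega

theorem flift_eq (φ : AFml) : ∀ c : ℕ, φ.lift c = φ.substAll (shiftV c) := by
  induction φ <;> intro c <;> simp_all [AFml.lift, AFml.substAll, tlift_eq, liftSub_shift]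

theorem numeral_sub (n : ℕ) (σ : ℕ → ATerm) : (numeral n).substAll σ = numeral n := by
  induction n <;> simp_all [numeral, ATerm.substAll]

theorem numeral_lift (n c : ℕ) : (numeral n).lift c = numeral n := by
  rw [tlift_eq, numeral_sub]

theorem tfree_congr {c : ℕ} {σ τ : ℕ → ATerm} (h : ∀ i < c, σ i = τ i) (t : ATerm)
    (ht : t.FreeLt c) : t.substAll σ = t.substAll τ := by
  induction t <;> simp_all [ATerm.FreeLt, ATerm.substAll]

theorem ffree_congr (φ : AFml) : ∀ {c : ℕ} {σ τ : ℕ → ATerm} (_ : ∀ i < c, σ i = τ i)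
    (_ : φ.FreeLt c), φ.substAll σ = φ.substAll τ := by
  have aux : ∀ {c : ℕ} {σ τ : ℕ → ATerm} (_ : ∀ i < c, σ i = τ i),
      ∀ i < c + 1, liftSub σ i = liftSub τ i := by
    intro c σ τ h i hi
    cases i with
    | zero => rfl
    | succ i => simp only [liftSub]; rw [h i (by omega)]
  induction φ with
  | eq t s => intro c σ τ h hf; simp only [AFml.substAll]; rw [tfree_congr h t hf.1, tfree_congr h s hf.2]
  | le t s => intro c σ τ h hf; simp only [AFml.substAll]; rw [tfree_congr h t hf.1, tfree_congr h s hf.2]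
  | neg φ ih => intro c σ τ h hf; simp only [AFml.substAll]; rw [ih h hf]
  | and φ ψ ih1 ih2 => intro c σ τ h hf; simp only [AFml.substAll]; rw [ih1 h hf.1, ih2 h hf.2]
  | or φ ψ ih1 ih2 => intro c σ τ h hf; simp only [AFml.substAll]; rw [ih1 h hf.1, ih2 h hf.2]
  | imp φ ψ ih1 ih2 => intro c σ τ h hf; simp only [AFml.substAll]; rw [ih1 h hf.1, ih2 h hf.2]
  | all φ ih => intro c σ τ h hf; simp only [AFml.substAll]; rw [ih (aux h) hf]
  | ex φ ih => intro c σ τ h hf; simp only [AFml.substAll]; rw [ih (aux h) hf]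

theorem tfree_lift (t : ATerm) : ∀ c, t.FreeLt c → (t.lift 0).FreeLt (c + 1) := by
  induction t <;> intro c h <;> simp_all [ATerm.FreeLt, ATerm.lift]

theorem tfree_sub (t : ATerm) {c : ℕ} {σ : ℕ → ATerm} (h : ∀ i, (σ i).FreeLt c) :
    (t.substAll σ).FreeLt c := by
  induction t <;> simp_all [ATerm.FreeLt, ATerm.substAll]

theorem ffree_sub (φ : AFml) : ∀ {c : ℕ} {σ : ℕ → ATerm} (_ : ∀ i, (σ i).FreeLt c),
    (φ.substAll σ).FreeLt c := by
  have aux : ∀ {c : ℕ} {σ : ℕ → ATerm} (_ : ∀ i, (σ i).FreeLt c),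
      ∀ i, (liftSub σ i).FreeLt (c + 1) := by
    intro c σ h i
    cases i with
    | zero => simp [liftSub, ATerm.FreeLt]
    | succ i => exact tfree_lift _ _ (h i)
  induction φ with
  | eq t s => intro c σ h; exact ⟨tfree_sub t h, tfree_sub s h⟩
  | le t s => intro c σ h; exact ⟨tfree_sub t h, tfree_sub s h⟩
  | neg φ ih => intro c σ h; exact ih h
  | and φ ψ ih1 ih2 => intro c σ h; exact ⟨ih1 h, ih2 h⟩
  | or φ ψ ih1 ih2 => intro c σ h; exact ⟨ih1 h, ih2 h⟩
  | imp φ ψ ih1 ih2 => intro c σ h; exact ⟨ih1 h, ih2 h⟩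
  | all φ ih => intro c σ h; exact ih (aux h)
  | ex φ ih => intro c σ h; exact ih (aux h)

theorem numeral_free (n c : ℕ) : (numeral n).FreeLt c := by
  induction n <;> simp_all [numeral, ATerm.FreeLt]

theorem val_sub (σ : ℕ → ATerm) (ρ : ℕ → ℕ) (t : ATerm) :
    (t.substAll σ).val ρ = t.val (fun n => (σ n).val ρ) := by
  induction t <;> simp_all [ATerm.val, ATerm.substAll]

theorem val_lift (a : ℕ) (ρ : ℕ → ℕ) (t : ATerm) :
    (t.lift 0).val (consEnv a ρ) = t.val ρ := by
  rw [tlift_eq, val_sub]; congr 1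

theorem sat_sub (φ : AFml) : ∀ (σ : ℕ → ATerm) (ρ : ℕ → ℕ),
    (φ.substAll σ).Sat ρ ↔ φ.Sat (fun n => (σ n).val ρ) := by
  have aux : ∀ (σ : ℕ → ATerm) (ρ : ℕ → ℕ) (a : ℕ),
      (fun n => (liftSub σ n).val (consEnv a ρ)) = consEnv a (fun n => (σ n).val ρ) := by
    intro σ ρ a
    funext n
    cases n with
    | zero => rfl
    | succ n => simp only [liftSub, val_lift]; rfl
  induction φ <;> intro σ ρ <;> simp_all [AFml.Sat, AFml.substAll, val_sub]

theorem delta0_sub {φ : AFml} (h : IsDelta0 φ) : ∀ (σ : ℕ → ATerm), IsDelta0 (φ.substAll σ) := by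
  induction h with
  | eq t s => intro σ; exact .eq _ _
  | le t s => intro σ; exact .le _ _
  | neg _ ih => intro σ; exact .neg (ih σ)
  | and _ _ ih1 ih2 => intro σ; exact .and (ih1 σ) (ih2 σ)
  | or _ _ ih1 ih2 => intro σ; exact .or (ih1 σ) (ih2 σ)
  | imp _ _ ih1 ih2 => intro σ; exact .imp (ih1 σ) (ih2 σ)
  | ball t _ ih =>
    intro σ
    simp only [AFml.substAll, lift_liftSub]
    exact .ball _ (ih _)
  | bex t _ ih =>
    intro σ
    simp only [AFml.substAll, lift_liftSub]
    exact .bex _ (ih _)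

/-! ### Definability in the standard model -/

def Tm (f : (ℕ → ℕ) → ℕ) : Prop := ∃ t : ATerm, ∀ ρ, t.val ρ = f ρ

def Del (R : (ℕ → ℕ) → Prop) : Prop := ∃ φ : AFml, IsDelta0 φ ∧ ∀ ρ, φ.Sat ρ ↔ R ρ

theorem Tm.v (i : ℕ) : Tm (fun ρ => ρ i) := ⟨.var i, fun _ => rfl⟩
theorem numeral_val (n : ℕ) (ρ : ℕ → ℕ) : (numeral n).val ρ = n := by
  induction n <;> simp_all [numeral, ATerm.val]
theorem Tm.c (k : ℕ) : Tm (fun _ => k) := ⟨numeral k, fun _ => numeral_val k _⟩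
theorem Tm.add {f g : (ℕ → ℕ) → ℕ} (hf : Tm f) (hg : Tm g) : Tm (fun ρ => f ρ + g ρ) := by
  obtain ⟨t, ht⟩ := hf
  obtain ⟨s, hs⟩ := hg
  exact ⟨.add t s, fun ρ => by simp [ATerm.val, ht, hs]⟩
theorem Tm.mul {f g : (ℕ → ℕ) → ℕ} (hf : Tm f) (hg : Tm g) : Tm (fun ρ => f ρ * g ρ) := by
  obtain ⟨t, ht⟩ := hf
  obtain ⟨s, hs⟩ := hg
  exact ⟨.mul t s, fun ρ => by simp [ATerm.val, ht, hs]⟩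

theorem Del.eq {f g : (ℕ → ℕ) → ℕ} (hf : Tm f) (hg : Tm g) : Del (fun ρ => f ρ = g ρ) := by
  obtain ⟨t, ht⟩ := hf
  obtain ⟨s, hs⟩ := hg
  exact ⟨.eq t s, .eq _ _, fun ρ => by simp [AFml.Sat, ht, hs]⟩
theorem Del.le {f g : (ℕ → ℕ) → ℕ} (hf : Tm f) (hg : Tm g) : Del (fun ρ => f ρ ≤ g ρ) := by
  obtain ⟨t, ht⟩ := hf
  obtain ⟨s, hs⟩ := hg
  exact ⟨.le t s, .le _ _, fun ρ => by simp [AFml.Sat, ht, hs]⟩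
theorem Del.and {R S : (ℕ → ℕ) → Prop} (hR : Del R) (hS : Del S) : Del (fun ρ => R ρ ∧ S ρ) := by
  obtain ⟨t, h1, ht⟩ := hR
  obtain ⟨s, h2, hs⟩ := hS
  exact ⟨.and t s, .and h1 h2, fun ρ => by simp [AFml.Sat, ht, hs]⟩
theorem Del.or {R S : (ℕ → ℕ) → Prop} (hR : Del R) (hS : Del S) : Del (fun ρ => R ρ ∨ S ρ) := by
  obtain ⟨t, h1, ht⟩ := hR
  obtain ⟨s, h2, hs⟩ := hS
  exact ⟨.or t s, .or h1 h2, fun ρ => by simp [AFml.Sat, ht, hs]⟩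
theorem Del.imp {R S : (ℕ → ℕ) → Prop} (hR : Del R) (hS : Del S) : Del (fun ρ => R ρ → S ρ) := by
  obtain ⟨t, h1, ht⟩ := hR
  obtain ⟨s, h2, hs⟩ := hS
  exact ⟨.imp t s, .imp h1 h2, fun ρ => by simp [AFml.Sat, ht, hs]⟩
theorem Del.bex {f : (ℕ → ℕ) → ℕ} {R : ℕ → (ℕ → ℕ) → Prop} (hf : Tm f)
    (hR : Del (fun ρ => R (ρ 0) (fun i => ρ (i + 1)))) : Del (fun ρ => ∃ a, a ≤ f ρ ∧ R a ρ) := by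
  obtain ⟨t, ht⟩ := hf
  obtain ⟨s, h2, hs⟩ := hR
  refine ⟨_, .bex t h2, fun ρ => ?_⟩
  simp only [AFml.Sat, val_lift, ht, hs]
  rfl
theorem Del.ball {f : (ℕ → ℕ) → ℕ} {R : ℕ → (ℕ → ℕ) → Prop} (hf : Tm f)
    (hR : Del (fun ρ => R (ρ 0) (fun i => ρ (i + 1)))) : Del (fun ρ => ∀ a, a ≤ f ρ → R a ρ) := by
  obtain ⟨t, ht⟩ := hf
  obtain ⟨s, h2, hs⟩ := hR
  refine ⟨_, .ball t h2, fun ρ => ?_⟩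
  simp only [AFml.Sat, val_lift, ht, hs]
  rfl

def Del3 (D : ℕ → ℕ → ℕ → Prop) : Prop := Del (fun ρ => D (ρ 0) (ρ 1) (ρ 2))

def env3 (x y z : ATerm) : ℕ → ATerm
  | 0 => x
  | 1 => y
  | 2 => z
  | _ + 3 => .zero

theorem Del3.sub {D : ℕ → ℕ → ℕ → Prop} (hD : Del3 D) {f g h : (ℕ → ℕ) → ℕ}
    (hf : Tm f) (hg : Tm g) (hh : Tm h) : Del (fun ρ => D (f ρ) (g ρ) (h ρ)) := by
  obtain ⟨φ, h1, h2⟩ := hD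
  obtain ⟨t, ht⟩ := hf
  obtain ⟨s, hs⟩ := hg
  obtain ⟨r, hr⟩ := hh
  refine ⟨φ.substAll (env3 t s r), delta0_sub h1 _, fun ρ => ?_⟩
  rw [sat_sub, h2]
  simp [env3, ht, hs, hr]

/-- functions with a `Σ₁` graph in normal form -/
def Rep (f : ℕ → ℕ) : Prop :=
  ∃ D : ℕ → ℕ → ℕ → Prop, Del3 D ∧ ∀ x y, f x = y ↔ ∃ z, D x y z

theorem Rep.const (k : ℕ) : Rep (fun _ => k) :=
  ⟨fun _ y _ => y = k, Del.eq (.v 1) (.c k), fun x y => by simp [eq_comm]⟩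
theorem Rep.id : Rep (fun x => x) :=
  ⟨fun x y _ => y = x, Del.eq (.v 1) (.v 0), fun x y => by simp [eq_comm]⟩

theorem Del.pair {f g h : (ℕ → ℕ) → ℕ} (hf : Tm f) (hg : Tm g) (hh : Tm h) :
    Del (fun ρ => h ρ = Nat.pair (f ρ) (g ρ)) := by
  have : Del (fun ρ => (f ρ + 1 ≤ g ρ ∧ h ρ = g ρ * g ρ + f ρ) ∨
      (g ρ ≤ f ρ ∧ h ρ = f ρ * f ρ + f ρ + g ρ)) :=
    ((Del.le (hf.add (.c 1)) hg).and (.eq hh ((hg.mul hg).add hf))).or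
      ((Del.le hg hf).and (.eq hh (((hf.mul hf).add hf).add hg)))
  convert this using 2 with ρ
  rw [Nat.pair]
  split_ifs with hlt
  · constructor
    · intro h; exact .inl ⟨hlt, h⟩
    · rintro (h | h); exacts [h.2, by omega]
  · constructor
    · intro h; exact .inr ⟨by omega, h⟩
    · rintro (h | h); exacts [by omega, h.2]

theorem Rep.comp {f g : ℕ → ℕ} (hf : Rep f) (hg : Rep g) : Rep (fun x => f (g x)) := by
  obtain ⟨D, hD, h1⟩ := hf
  obtain ⟨E, hE, h2⟩ := hg
  refine ⟨fun x y z => ∃ u, u ≤ z ∧ ∃ z1, z1 ≤ z ∧ ∃ z2, z2 ≤ z ∧ E x u z1 ∧ D u y z2, ?_, ?_⟩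
  · exact .bex (.v 2) (.bex (.v 3) (.bex (.v 4)
      ((hE.sub (.v 3) (.v 2) (.v 1)).and (hD.sub (.v 2) (.v 4) (.v 0)))))
  · intro x y
    constructor
    · intro h
      obtain ⟨z1, hz1⟩ := (h2 x _).1 rfl
      obtain ⟨z2, hz2⟩ := (h1 _ _).1 h
      exact ⟨g x + z1 + z2, g x, by omega, z1, by omega, z2, by omega, hz1, hz2⟩
    · rintro ⟨z, u, -, z1, -, z2, -, h3, h4⟩
      have := (h2 x u).2 ⟨_, h3⟩
      subst this
      exact (h1 _ _).2 ⟨_, h4⟩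

theorem Rep.pair {f g : ℕ → ℕ} (hf : Rep f) (hg : Rep g) :
    Rep (fun x => Nat.pair (f x) (g x)) := by
  obtain ⟨D, hD, h1⟩ := hf
  obtain ⟨E, hE, h2⟩ := hg
  refine ⟨fun x y z => ∃ u, u ≤ z ∧ ∃ v, v ≤ z ∧ ∃ z1, z1 ≤ z ∧ ∃ z2, z2 ≤ z ∧
    D x u z1 ∧ E x v z2 ∧ y = Nat.pair u v, ?_, ?_⟩
  · exact .bex (.v 2) (.bex (.v 3) (.bex (.v 4) (.bex (.v 5)
      ((hD.sub (.v 4) (.v 3) (.v 1)).and ((hE.sub (.v 4) (.v 2) (.v 0)).and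
        (.pair (.v 3) (.v 2) (.v 5)))))))
  · intro x y
    constructor
    · intro h
      obtain ⟨z1, hz1⟩ := (h1 x _).1 rfl
      obtain ⟨z2, hz2⟩ := (h2 x _).1 rfl
      exact ⟨f x + g x + z1 + z2, f x, by omega, g x, by omega, z1, by omega, z2, by omega,
        hz1, hz2, h.symm⟩
    · rintro ⟨z, u, -, v, -, z1, -, z2, -, h3, h4, h5⟩
      have e1 := (h1 x u).2 ⟨_, h3⟩
      have e2 := (h2 x v).2 ⟨_, h4⟩
      rw [h5, ← e1, ← e2]

theorem Del.md {f g i h : (ℕ → ℕ) → ℕ} (hf : Tm f) (hg : Tm g) (hi : Tm i) (hh : Tm h) 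
    (hf' : Tm (fun ρ => f (fun i => ρ (i + 1)))) (hg' : Tm (fun ρ => g (fun i => ρ (i + 1))))
    (hi' : Tm (fun ρ => i (fun i => ρ (i + 1)))) (hh' : Tm (fun ρ => h (fun i => ρ (i + 1)))) :
    Del (fun ρ => h ρ = f ρ % ((i ρ + 1) * g ρ + 1)) := by
  have : Del (fun ρ => h ρ ≤ (i ρ + 1) * g ρ ∧
      ∃ q, q ≤ f ρ ∧ f ρ = q * ((i ρ + 1) * g ρ + 1) + h ρ) :=
    (Del.le hh ((hi.add (.c 1)).mul hg)).and (.bex hf (.eq hf'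
      (((Tm.v 0).mul (((hi'.add (.c 1)).mul hg').add (.c 1))).add hh')))
  convert this using 2 with ρ
  generalize (i ρ + 1) * g ρ = d
  constructor
  · intro h
    refine ⟨?_, f ρ / (d + 1), Nat.div_le_self _ _, ?_⟩
    · rw [h]; exact Nat.le_of_lt_succ (Nat.mod_lt _ (by omega))
    · rw [h, mul_comm]; exact (Nat.div_add_mod _ _).symm
  · rintro ⟨h1, q, -, h3⟩
    rw [h3, Nat.mul_add_mod', Nat.mod_eq_of_lt (by omega)]

theorem Rep.num : Rep (fun k => (numeral k).code) := by
  refine ⟨fun k y z => ∃ a, a ≤ z ∧ ∃ b, b ≤ z ∧ 2 = a % ((0 + 1) * b + 1) ∧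
    (∀ i, i ≤ k → i + 1 ≤ k → ∃ u, u ≤ z ∧ ∃ v, v ≤ z ∧ u = a % ((i + 1) * b + 1) ∧
      v = a % ((i + 1 + 1) * b + 1) ∧ v = Nat.pair 2 u) ∧ y = a % ((k + 1) * b + 1), ?_, ?_⟩
  · exact .bex (.v 2) (.bex (.v 3) (.and
      (.md (.v 1) (.v 0) (.c 0) (.c 2) (.v 2) (.v 1) (.c 0) (.c 2))
      (.and (.ball (.v 2) (.imp (.le (.add (.v 0) (.c 1)) (.v 3))
        (.bex (.v 5) (.bex (.v 6) (.and
          (.md (.v 4) (.v 3) (.v 2) (.v 1) (.v 5) (.v 4) (.v 3) (.v 2))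
          (.and (.md (.v 4) (.v 3) (.add (.v 2) (.c 1)) (.v 0) (.v 5) (.v 4)
              (.add (.v 3) (.c 1)) (.v 1))
            (.pair (.c 2) (.v 1) (.v 0))))))))
        (.md (.v 1) (.v 0) (.v 2) (.v 3) (.v 2) (.v 1) (.v 3) (.v 4)))))
  · intro k y
    constructor
    · rintro rfl
      let l : List ℕ := (List.range (k + 1)).map fun i => (numeral i).code
      have hb : ∀ i, i ≤ k → (numeral i).code =
          (Nat.unbeta l).unpair.1 % ((i + 1) * (Nat.unbeta l).unpair.2 + 1) := by
        intro i hi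
        have := Nat.beta_unbeta_coe l ⟨i, by simp [l]; omega⟩
        rw [Nat.beta] at this
        simp only [Fin.getElem_fin, l, List.getElem_map, List.getElem_range] at this
        exact this.symm
      generalize (Nat.unbeta l).unpair.1 = a at hb
      generalize (Nat.unbeta l).unpair.2 = b at hb
      refine ⟨a + b, a, by omega, b, by omega, ?_, ?_, hb k le_rfl⟩
      · exact hb 0 (by omega)
      · intro i hi hi1
        refine ⟨_, ?_, _, ?_, hb i hi, hb (i+1) hi1, rfl⟩
        · rw [hb i hi]; exact (Nat.mod_le _ _).trans (by omega)
        · rw [hb (i+1) hi1]; exact (Nat.mod_le _ _).trans (by omega)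
    · rintro ⟨z, a, -, b, -, h0, hs, hy⟩
      have : ∀ i, i ≤ k → (numeral i).code = a % ((i + 1) * b + 1) := by
        intro i
        induction i with
        | zero => intro _; rw [← h0]; rfl
        | succ i ih =>
          intro hi
          obtain ⟨u, -, v, -, hu, hv, huv⟩ := hs i (by omega) hi
          rw [← hv, huv, hu, ← ih (by omega)]; rfl
      rw [hy]; exact this k le_rfl

/-- substitution families -/
def Fam (σ : ℕ → ℕ → ATerm) : Prop :=
  ∀ i, (∀ k, σ k i = numeral k) ∨ ∃ t, ∀ k, σ k i = t

theorem Fam.lift {σ : ℕ → ℕ → ATerm} (h : Fam σ) : Fam (fun k => liftSub (σ k)) := by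
  intro i
  cases i with
  | zero => exact .inr ⟨_, fun _ => rfl⟩
  | succ i =>
    rcases h i with h | ⟨t, h⟩
    · left; intro k; simp [liftSub, h, numeral_lift]
    · right; exact ⟨t.lift 0, fun k => by simp [liftSub, h]⟩

theorem Rep.tsub {σ : ℕ → ℕ → ATerm} (h : Fam σ) (t : ATerm) :
    Rep (fun k => (t.substAll (σ k)).code) := by
  induction t with
  | var i =>
    rcases h i with h | ⟨t, h⟩
    · simpa [ATerm.substAll, h] using Rep.num
    · simpa [ATerm.substAll, h] using Rep.const _
  | zero => exact Rep.const _
  | succ t ih => exact (Rep.const 2).pair ih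
  | add t s ih1 ih2 => exact (Rep.const 3).pair (ih1.pair ih2)
  | mul t s ih1 ih2 => exact (Rep.const 4).pair (ih1.pair ih2)

theorem Rep.fsub (φ : AFml) : ∀ {σ : ℕ → ℕ → ATerm} (_ : Fam σ),
    Rep (fun k => (φ.substAll (σ k)).code) := by
  induction φ with
  | eq t s => intro σ h; exact (Rep.const 0).pair ((Rep.tsub h t).pair (Rep.tsub h s))
  | le t s => intro σ h; exact (Rep.const 1).pair ((Rep.tsub h t).pair (Rep.tsub h s))
  | neg φ ih => intro σ h; exact (Rep.const 2).pair (ih h)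
  | and φ ψ ih1 ih2 => intro σ h; exact (Rep.const 3).pair ((ih1 h).pair (ih2 h))
  | or φ ψ ih1 ih2 => intro σ h; exact (Rep.const 4).pair ((ih1 h).pair (ih2 h))
  | imp φ ψ ih1 ih2 => intro σ h; exact (Rep.const 5).pair ((ih1 h).pair (ih2 h))
  | all φ ih => intro σ h; exact (Rep.const 6).pair (ih h.lift)
  | ex φ ih => intro σ h; exact (Rep.const 7).pair (ih h.lift)

theorem Rep.app (P : AFml) : Rep (fun k => (P.subst0 (numeral k)).code) := by
  refine Rep.fsub P (σ := fun k => subst0Env (numeral k)) ?_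
  intro i
  cases i with
  | zero => exact .inl fun k => rfl
  | succ i => exact .inr ⟨_, fun _ => rfl⟩

/-- the code of `P^j(∃v (v = x̄ ∧ φ))`, where `φ` has code `x` -/
def gfun (P : AFml) : ℕ → ℕ → ℕ
  | 0, x => Nat.pair 7 (Nat.pair 3 (Nat.pair (Nat.pair 0 (Nat.pair 0 (numeral x).code)) x))
  | j + 1, x => (P.subst0 (numeral (gfun P j x))).code

theorem Rep.gfun (P : AFml) (j : ℕ) : Rep (gfun P j) := by
  induction j with
  | zero =>
    exact (Rep.const 7).pair ((Rep.const 3).pair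
      (((Rep.const 0).pair ((Rep.const 0).pair Rep.num)).pair Rep.id))
  | succ j ih => exact Rep.comp (f := fun k => (P.subst0 (numeral k)).code) (Rep.app P) ih

def diagF (θ : AFml) : AFml := .ex (.and (.eq (.var 0) (numeral θ.code)) θ)

theorem gfun_spec (P θ : AFml) (j : ℕ) : gfun P j θ.code = (iterPred P j (diagF θ)).code := by
  induction j with
  | zero => rfl
  | succ j ih => simp only [PLN.gfun, iterPred, AFml.appNum, gnum, ih]

/-! ### Derivations in PA -/

theorem Proves.mono {Γ Δ : Set AFml} (h : Γ ⊆ Δ) {φ : AFml} (hp : Proves Γ φ) : Proves Δ φ := by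
  induction hp with
  | ax h1 => exact .ax (h h1)
  | taut h1 => exact .taut h1
  | mp _ _ ih1 ih2 => exact .mp ih1 ih2
  | allE φ t => exact .allE φ t
  | exI φ t => exact .exI φ t
  | allImp φ ψ => exact .allImp φ ψ
  | vacAll φ => exact .vacAll φ
  | exDef φ => exact .exDef φ
  | gen _ ih => exact .gen ih
  | eqRefl t => exact .eqRefl t
  | eqSubst φ t s => exact .eqSubst φ t s

section deriv
variable {Γ : Set AFml}

theorem tc1 {A C : AFml} (h1 : Proves Γ A) (h : ∀ v, A.evalProp v → C.evalProp v) : Proves Γ C :=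
  .mp (.taut (φ := .imp A C) h) h1
theorem tc2 {A B C : AFml} (h1 : Proves Γ A) (h2 : Proves Γ B)
    (h : ∀ v, A.evalProp v → B.evalProp v → C.evalProp v) : Proves Γ C :=
  .mp (.mp (.taut (φ := .imp A (.imp B C)) h) h1) h2
theorem tc3 {A B C D : AFml} (h1 : Proves Γ A) (h2 : Proves Γ B) (h3 : Proves Γ C)
    (h : ∀ v, A.evalProp v → B.evalProp v → C.evalProp v → D.evalProp v) : Proves Γ D :=
  .mp (.mp (.mp (.taut (φ := .imp A (.imp B (.imp C D))) h) h1) h2) h3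
theorem tc4 {A B C D E : AFml} (h1 : Proves Γ A) (h2 : Proves Γ B) (h3 : Proves Γ C)
    (h4 : Proves Γ D)
    (h : ∀ v, A.evalProp v → B.evalProp v → C.evalProp v → D.evalProp v → E.evalProp v) :
    Proves Γ E :=
  .mp (.mp (.mp (.mp (.taut (φ := .imp A (.imp B (.imp C (.imp D E)))) h) h1) h2) h3) h4

theorem spec {φ : AFml} (h : Proves Γ (.all φ)) (t : ATerm) : Proves Γ (φ.subst0 t) :=
  .mp (.allE φ t) h

theorem allI {φ ψ : AFml} (h : Proves Γ (.imp (φ.lift 0) ψ)) : Proves Γ (.imp φ (.all ψ)) :=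
  tc2 (.vacAll φ) (.mp (.allImp _ _) (.gen h)) fun v => by
    simp only [AFml.evalProp]; tauto

theorem exE {φ ψ : AFml} (h : Proves Γ (.imp φ (ψ.lift 0))) : Proves Γ (.imp (.ex φ) ψ) := by
  have h1 : Proves Γ (.imp ((AFml.neg ψ).lift 0) (.neg φ)) :=
    tc1 h fun v => by simp only [AFml.evalProp, AFml.lift]; tauto
  exact tc2 (allI h1) (.exDef φ) fun v => by simp only [iffF, AFml.evalProp]; tauto

theorem eqSymm (t s : ATerm) : Proves Γ (.imp (.eq t s) (.eq s t)) := by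
  have := Proves.eqSubst (Γ := Γ) (.eq (.var 0) (t.lift 0)) t s
  simp only [AFml.subst0, AFml.substAll, lift_subst0] at this
  simp only [ATerm.substAll, subst0Env] at this
  exact tc2 this (.eqRefl t) fun v => by simp only [AFml.evalProp]; tauto

theorem eqTrans (t s r : ATerm) : Proves Γ (.imp (.eq t s) (.imp (.eq s r) (.eq t r))) := by
  have := Proves.eqSubst (Γ := Γ) (.eq (t.lift 0) (.var 0)) s r
  simp only [AFml.subst0, AFml.substAll, lift_subst0] at this
  simp only [ATerm.substAll, subst0Env] at this
  exact tc1 this fun v => by simp only [AFml.evalProp]; tauto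

theorem eqSucc (t s : ATerm) : Proves Γ (.imp (.eq t s) (.eq (.succ t) (.succ s))) := by
  have := Proves.eqSubst (Γ := Γ) (.eq (.succ (t.lift 0)) (.succ (.var 0))) t s
  simp only [AFml.subst0, AFml.substAll, ATerm.substAll, lift_subst0] at this
  simp only [subst0Env] at this
  exact tc2 this (.eqRefl _) fun v => by simp only [AFml.evalProp]; tauto

theorem eqAddR (r t s : ATerm) : Proves Γ (.imp (.eq t s) (.eq (.add r t) (.add r s))) := by
  have := Proves.eqSubst (Γ := Γ) (.eq (.add (r.lift 0) (t.lift 0)) (.add (r.lift 0) (.var 0))) t s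
  simp only [AFml.subst0, AFml.substAll, ATerm.substAll, lift_subst0] at this
  simp only [subst0Env] at this
  exact tc2 this (.eqRefl _) fun v => by simp only [AFml.evalProp]; tauto

theorem eqAddL (r t s : ATerm) : Proves Γ (.imp (.eq t s) (.eq (.add t r) (.add s r))) := by
  have := Proves.eqSubst (Γ := Γ) (.eq (.add (t.lift 0) (r.lift 0)) (.add (.var 0) (r.lift 0))) t s
  simp only [AFml.subst0, AFml.substAll, ATerm.substAll, lift_subst0] at this
  simp only [subst0Env] at this
  exact tc2 this (.eqRefl _) fun v => by simp only [AFml.evalProp]; tauto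

theorem eqMulR (r t s : ATerm) : Proves Γ (.imp (.eq t s) (.eq (.mul r t) (.mul r s))) := by
  have := Proves.eqSubst (Γ := Γ) (.eq (.mul (r.lift 0) (t.lift 0)) (.mul (r.lift 0) (.var 0))) t s
  simp only [AFml.subst0, AFml.substAll, ATerm.substAll, lift_subst0] at this
  simp only [subst0Env] at this
  exact tc2 this (.eqRefl _) fun v => by simp only [AFml.evalProp]; tauto

theorem eqMulL (r t s : ATerm) : Proves Γ (.imp (.eq t s) (.eq (.mul t r) (.mul s r))) := by
  have := Proves.eqSubst (Γ := Γ) (.eq (.mul (t.lift 0) (r.lift 0)) (.mul (.var 0) (r.lift 0))) t s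
  simp only [AFml.subst0, AFml.substAll, ATerm.substAll, lift_subst0] at this
  simp only [subst0Env] at this
  exact tc2 this (.eqRefl _) fun v => by simp only [AFml.evalProp]; tauto

theorem leR (r t s : ATerm) : Proves Γ (.imp (.eq t s) (.imp (.le r t) (.le r s))) := by
  have := Proves.eqSubst (Γ := Γ) (.le (r.lift 0) (.var 0)) t s
  simp only [AFml.subst0, AFml.substAll, lift_subst0] at this
  simpa only [ATerm.substAll, subst0Env] using this

theorem leL (r t s : ATerm) : Proves Γ (.imp (.eq t s) (.imp (.le t r) (.le s r))) := by
  have := Proves.eqSubst (Γ := Γ) (.le (.var 0) (r.lift 0)) t s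
  simp only [AFml.subst0, AFml.substAll, lift_subst0] at this
  simpa only [ATerm.substAll, subst0Env] using this

theorem symm' {t s : ATerm} (h : Proves Γ (.eq t s)) : Proves Γ (.eq s t) := .mp (eqSymm _ _) h
theorem trans' {t s r : ATerm} (h : Proves Γ (.eq t s)) (h2 : Proves Γ (.eq s r)) :
    Proves Γ (.eq t r) := .mp (.mp (eqTrans _ _ _) h) h2
end deriv

theorem pSucc0 (t : ATerm) : Proves PA (.neg (.eq (.succ t) .zero)) := spec (.ax (Γ := PA) PAax.succNeZero) t
theorem pAdd0 (t : ATerm) : Proves PA (.eq (.add t .zero) t) := spec (.ax (Γ := PA) PAax.addZero) t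
theorem pMul0 (t : ATerm) : Proves PA (.eq (.mul t .zero) .zero) := spec (.ax (Γ := PA) PAax.mulZero) t
theorem pSuccInj (t s : ATerm) : Proves PA (.imp (.eq (.succ t) (.succ s)) (.eq t s)) := by
  have := spec (spec (.ax (Γ := PA) PAax.succInj) t) s
  simpa only [AFml.subst0, AFml.substAll, ATerm.substAll, liftSub, subst0Env, lift_subst0] using this
theorem pAddS (t s : ATerm) : Proves PA (.eq (.add t (.succ s)) (.succ (.add t s))) := by
  have := spec (spec (.ax (Γ := PA) PAax.addSucc) t) s
  simpa only [AFml.subst0, AFml.substAll, ATerm.substAll, liftSub, subst0Env, lift_subst0] using this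
theorem pMulS (t s : ATerm) : Proves PA (.eq (.mul t (.succ s)) (.add (.mul t s) t)) := by
  have := spec (spec (.ax (Γ := PA) PAax.mulSucc) t) s
  simpa only [AFml.subst0, AFml.substAll, ATerm.substAll, liftSub, subst0Env, lift_subst0] using this
theorem pLe (t s : ATerm) : Proves PA (iffF (.le t s)
    (.ex (.eq (.add (.var 0) (t.lift 0)) (s.lift 0)))) := by
  have := spec (spec (.ax (Γ := PA) PAax.leDef) t) s
  simp only [iffF, AFml.subst0, AFml.substAll, ATerm.substAll, liftSub, subst0Env, lift_subst0,
    lift_liftSub, ATerm.lift] at this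
  exact this

theorem leI (z t s : ATerm) : Proves PA (.imp (.eq (.add z t) s) (.le t s)) := by
  have := Proves.exI (Γ := PA) (.eq (.add (.var 0) (t.lift 0)) (s.lift 0)) z
  simp only [AFml.subst0, AFml.substAll, ATerm.substAll, subst0Env, lift_subst0] at this
  exact tc2 this (pLe t s) fun v => by simp only [iffF, AFml.evalProp]; tauto

/-- `x = 0 ∨ ∃ w, x = S w` -/
theorem pCases (t : ATerm) : Proves PA (.or (.eq t .zero)
    (.ex (.eq (t.lift 0) (.succ (.var 0))))) := by
  let φ : AFml := .or (.eq (.var 0) .zero) (.ex (.eq (.var 1) (.succ (.var 0))))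
  have hall : Proves PA (.all φ) := by
    refine .mp (.ax (Γ := PA) (PAax.ind φ)) ?_
    have h0 : Proves PA (φ.subst0 .zero) :=
      tc1 (.eqRefl .zero) fun v => by
        simp only [φ, AFml.subst0, AFml.substAll, ATerm.substAll, subst0Env, AFml.evalProp]; tauto
    have h1 : Proves PA (.all (.imp φ (succSubst φ))) := by
      refine .gen ?_
      have := Proves.exI (Γ := PA) (.eq (.succ (.var 1)) (.succ (.var 0))) (.var 0)
      simp only [AFml.subst0, AFml.substAll, ATerm.substAll, subst0Env] at this
      refine tc2 this (.eqRefl (.succ (.var 0))) fun v => ?_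
      simp only [φ, succSubst, AFml.substAll, ATerm.substAll, liftSub, AFml.evalProp, if_true,
        ATerm.lift]
      simp only [Nat.not_lt_zero, if_false, Nat.reduceAdd]
      tauto
    exact tc2 h0 h1 fun v => by simp only [AFml.evalProp]; tauto
  have := spec hall t
  simpa only [φ, AFml.subst0, AFml.substAll, ATerm.substAll, liftSub, subst0Env] using this

theorem num_add (m n : ℕ) : Proves PA (.eq (.add (numeral m) (numeral n)) (numeral (m + n))) := by
  induction n with
  | zero => exact pAdd0 _
  | succ n ih => exact trans' (pAddS _ _) (.mp (eqSucc _ _) ih)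

theorem num_mul (m n : ℕ) : Proves PA (.eq (.mul (numeral m) (numeral n)) (numeral (m * n))) := by
  induction n with
  | zero => exact pMul0 _
  | succ n ih =>
    exact trans' (pMulS _ _) (trans' (.mp (eqAddL _ _ _) ih) (num_add _ _))

theorem num_ne : ∀ m n : ℕ, m ≠ n → Proves PA (.neg (.eq (numeral m) (numeral n)))
  | 0, 0, h => absurd rfl h
  | m + 1, 0, _ => pSucc0 _
  | 0, n + 1, _ => tc2 (pSucc0 (numeral n)) (eqSymm (numeral 0) (numeral (n+1))) fun v => by
      simp only [AFml.evalProp, numeral]; tauto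
  | m + 1, n + 1, h => tc2 (pSuccInj (numeral m) (numeral n)) (num_ne m n (by omega)) fun v => by
      simp only [AFml.evalProp, numeral]; tauto

theorem num_le {m n : ℕ} (h : m ≤ n) : Proves PA (.le (numeral m) (numeral n)) := by
  refine .mp (leI (numeral (n - m)) _ _) ?_
  have := num_add (n - m) m
  rwa [Nat.sub_add_cancel h] at this

/-- `t = 0 ∨ ... ∨ t = n` -/
def disjT (t : ATerm) : ℕ → AFml
  | 0 => .eq t .zero
  | n + 1 => .or (disjT t n) (.eq t (numeral (n + 1)))

theorem disjT_sub (t : ATerm) (σ : ℕ → ATerm) (n : ℕ) :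
    (disjT t n).substAll σ = disjT (t.substAll σ) n := by
  induction n with
  | zero => rfl
  | succ n ih => simp only [disjT, AFml.substAll, ih, numeral_sub]

theorem disjT_lift (t : ATerm) (n : ℕ) : (disjT t n).lift 0 = disjT (t.lift 0) n := by
  rw [flift_eq, disjT_sub, tlift_eq]

theorem disjT_elim {Γ : Set AFml} {t : ATerm} {χ : AFml} (n : ℕ)
    (h : ∀ i ≤ n, Proves Γ (.imp (.eq t (numeral i)) χ)) : Proves Γ (.imp (disjT t n) χ) := by
  induction n with
  | zero => exact h 0 le_rfl
  | succ n ih =>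
    exact tc2 (ih fun i hi => h i (by omega)) (h (n+1) le_rfl) fun v => by
      simp only [disjT, AFml.evalProp]; tauto

theorem disjT_intro {Γ : Set AFml} {t : ATerm} {n i : ℕ} (hi : i ≤ n) :
    Proves Γ (.imp (.eq t (numeral i)) (disjT t n)) := by
  induction n with
  | zero => obtain rfl : i = 0 := by omega
            exact .taut fun v => by simp only [disjT, AFml.evalProp, numeral]; tauto
  | succ n ih =>
    rcases Nat.lt_or_ge n i with h | h
    · obtain rfl : i = n + 1 := by omega
      exact .taut fun v => by simp only [disjT, AFml.evalProp]; tauto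
    · exact tc1 (ih h) fun v => by simp only [disjT, AFml.evalProp]; tauto

/-- from `z + x = n`, `x = S w` get `n = S (z + w)` -/
theorem addStep (x w z n : ATerm) :
    Proves PA (.imp (.eq x (.succ w)) (.imp (.eq (.add z x) n) (.eq (.succ (.add z w)) n))) := by
  have h1 : Proves PA (.imp (.eq x (.succ w)) (.eq (.succ (.add z w)) (.add z x))) :=
    tc4 (eqAddR z x (.succ w)) (pAddS z w) (eqTrans (.add z x) (.add z (.succ w)) (.succ (.add z w)))
      (eqSymm (.add z x) (.succ (.add z w))) fun v => by simp only [AFml.evalProp]; tauto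
  exact tc2 h1 (eqTrans (.succ (.add z w)) (.add z x) n) fun v => by
    simp only [AFml.evalProp]; tauto

theorem le_disj0 (n : ℕ) : Proves PA (.imp (.le (.var 0) (numeral n)) (disjT (.var 0) n)) →
    ∀ t, Proves PA (.imp (.le t (numeral n)) (disjT t n)) := by
  intro h t
  have := spec (.gen h) t
  simpa only [AFml.subst0, AFml.substAll, ATerm.substAll, numeral_sub, disjT_sub, subst0Env]
    using this

theorem le_disj (n : ℕ) : ∀ t, Proves PA (.imp (.le t (numeral n)) (disjT t n)) := by
  induction n with
  | zero =>
    apply le_disj0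
    have h1 : Proves PA (.imp (.ex (.eq (.var 1) (.succ (.var 0))))
        (.neg (.le (.var 0) .zero))) := by
      apply exE
      simp only [AFml.lift, ATerm.lift, Nat.not_lt_zero, if_false, Nat.reduceAdd]
      have : Proves PA (.imp (.ex (.eq (.add (.var 0) (.var 2)) .zero))
          (.neg (.eq (.var 1) (.succ (.var 0))))) := by
        apply exE
        simp only [AFml.lift, ATerm.lift, Nat.not_lt_zero, if_false, Nat.reduceAdd]
        exact tc2 (addStep (.var 2) (.var 1) (.var 0) .zero) (pSucc0 (.add (.var 0) (.var 1)))
          fun v => by simp only [AFml.evalProp]; tauto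
      have h2 := pLe (.var 1) .zero
      simp only [ATerm.lift, Nat.not_lt_zero, if_false, Nat.reduceAdd] at h2
      exact tc2 this h2 fun v => by simp only [iffF, AFml.evalProp]; tauto
    have h3 := pCases (.var 0)
    simp only [ATerm.lift, Nat.not_lt_zero, if_false, Nat.reduceAdd] at h3
    exact tc2 h1 h3 fun v => by simp only [AFml.evalProp, disjT, numeral]; tauto
  | succ n ih =>
    apply le_disj0
    have h1 : Proves PA (.imp (.ex (.eq (.var 1) (.succ (.var 0))))
        (.imp (.le (.var 0) (numeral (n+1))) (disjT (.var 0) (n+1)))) := by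
      apply exE
      simp only [AFml.lift, disjT_lift, numeral_lift, ATerm.lift, Nat.not_lt_zero, if_false, Nat.reduceAdd]
      have : Proves PA (.imp (.ex (.eq (.add (.var 0) (.var 2)) (numeral (n+1))))
          (.imp (.eq (.var 1) (.succ (.var 0))) (.le (.var 0) (numeral n)))) := by
        apply exE
        simp only [AFml.lift, numeral_lift, ATerm.lift, Nat.not_lt_zero, if_false, Nat.reduceAdd]
        exact tc3 (addStep (.var 2) (.var 1) (.var 0) (numeral (n+1)))
          (pSuccInj (.add (.var 0) (.var 1)) (numeral n))
          (leI (.var 0) (.var 1) (numeral n))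
          fun v => by simp only [AFml.evalProp, numeral]; tauto
      have h2 := pLe (.var 1) (numeral (n+1))
      simp only [ATerm.lift, numeral_lift, Nat.not_lt_zero, if_false, Nat.reduceAdd] at h2
      have h4 : Proves PA (.imp (disjT (.var 0) n) (.imp (.eq (.var 1) (.succ (.var 0)))
          (disjT (.var 1) (n+1)))) := by
        apply disjT_elim
        intro i hi
        exact tc3 (eqSucc (.var 0) (numeral i))
          (eqTrans (.var 1) (.succ (.var 0)) (.succ (numeral i)))
          (disjT_intro (t := .var 1) (i := i + 1) (n := n + 1) (by omega))
          fun v a b c d e => c (b e (a d))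
      exact tc4 this h2 (ih (.var 0)) h4 fun v a b c d e f => d (c (a (b.1 f) e)) e
    have h3 := pCases (.var 0)
    simp only [ATerm.lift, Nat.not_lt_zero, if_false, Nat.reduceAdd] at h3
    exact tc3 h1 h3 (disjT_intro (t := .var 0) (i := 0) (n := n + 1) (by omega)) fun v => by
      simp only [AFml.evalProp, numeral]; tauto

theorem num_nle {m n : ℕ} (h : ¬ m ≤ n) : Proves PA (.neg (.le (numeral m) (numeral n))) := by
  have : Proves PA (.imp (disjT (numeral m) n) botFml) := by
    apply disjT_elim
    intro i hi
    exact tc1 (num_ne m i (by omega)) fun v => by simp only [AFml.evalProp]; tauto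
  exact tc3 this (le_disj n (numeral m)) (num_ne 0 1 (by omega)) fun v => by
    simp only [AFml.evalProp, botFml, numeral]; tauto

theorem zeroLe (t : ATerm) : Proves PA (.le .zero t) := .mp (leI t _ _) (pAdd0 t)

/-- `w ≤ s → x = S w → x ≤ S s` for the shape needed -/
theorem succLe (t s : ATerm) : Proves PA (.imp (.le t s) (.le (.succ t) (.succ s))) := by
  have : Proves PA (.imp (.ex (.eq (.add (.var 0) (t.lift 0)) (s.lift 0)))
      (.le (.succ t) (.succ s))) := by
    apply exE
    simp only [AFml.lift, ATerm.lift]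
    exact tc4 (pAddS (.var 0) (t.lift 0)) (eqSucc (.add (.var 0) (t.lift 0)) (s.lift 0))
      (eqTrans (.add (.var 0) (.succ (t.lift 0))) (.succ (.add (.var 0) (t.lift 0)))
        (.succ (s.lift 0)))
      (leI (.var 0) (.succ (t.lift 0)) (.succ (s.lift 0)))
      fun v => by simp only [AFml.evalProp]; tauto
  exact tc2 this (pLe t s) fun v => by simp only [iffF, AFml.evalProp]; tauto

theorem le_total' (n : ℕ) : ∀ t, Proves PA (.or (.le t (numeral n)) (.le (numeral n) t)) := by
  induction n with
  | zero =>
    intro t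
    exact tc1 (zeroLe t) fun v => by simp only [AFml.evalProp, numeral]; tauto
  | succ n ih =>
    intro t
    have h1 : Proves PA (.imp (.ex (.eq (t.lift 0) (.succ (.var 0))))
        (.or (.le t (numeral (n+1))) (.le (numeral (n+1)) t))) := by
      apply exE
      simp only [AFml.lift, numeral_lift]
      have a := tc3 (ih (.var 0)) (succLe (.var 0) (numeral n)) (succLe (numeral n) (.var 0))
        (D := .or (.le (.succ (.var 0)) (numeral (n+1))) (.le (numeral (n+1)) (.succ (.var 0))))
        fun v => by simp only [AFml.evalProp, numeral]; tauto
      exact tc4 a (eqSymm (t.lift 0) (.succ (.var 0)))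
        (leL (numeral (n+1)) (.succ (.var 0)) (t.lift 0))
        (leR (numeral (n+1)) (.succ (.var 0)) (t.lift 0))
        fun v => by simp only [AFml.evalProp]; tauto
    have h2 := tc3 (leL (numeral (n+1)) .zero t) (eqSymm t .zero) (zeroLe (numeral (n+1)))
      (D := .imp (.eq t .zero) (.le t (numeral (n+1)))) fun v => by
        simp only [AFml.evalProp]; tauto
    exact tc3 h1 (pCases t) h2 fun v => by simp only [AFml.evalProp]; tauto

/-- the substitution of numerals -/
def nenv (ρ : ℕ → ℕ) : ℕ → ATerm := fun i => numeral (ρ i)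

theorem term_eval (ρ : ℕ → ℕ) (t : ATerm) :
    Proves PA (.eq (t.substAll (nenv ρ)) (numeral (t.val ρ))) := by
  induction t with
  | var i => exact .eqRefl _
  | zero => exact .eqRefl _
  | succ t ih => exact .mp (eqSucc _ _) ih
  | add t s ih1 ih2 =>
    exact trans' (.mp (eqAddL _ _ _) ih1) (trans' (.mp (eqAddR _ _ _) ih2) (num_add _ _))
  | mul t s ih1 ih2 =>
    exact trans' (.mp (eqMulL _ _ _) ih1) (trans' (.mp (eqMulR _ _ _) ih2) (num_mul _ _))

theorem nenv_cons (φ : AFml) (ρ : ℕ → ℕ) (a : ℕ) :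
    (φ.substAll (liftSub (nenv ρ))).subst0 (numeral a) = φ.substAll (nenv (consEnv a ρ)) := by
  rw [AFml.subst0, fcomp]
  congr 1
  funext i
  cases i with
  | zero => rfl
  | succ i => simp [liftSub, nenv, numeral_lift, numeral_sub, consEnv]

theorem nenv_var (φ : AFml) (ρ : ℕ → ℕ) :
    (φ.substAll (liftSub (nenv ρ))).subst0 (.var 0) = φ.substAll (liftSub (nenv ρ)) := by
  rw [AFml.subst0, fcomp]
  congr 1
  funext i
  cases i with
  | zero => rfl
  | succ i => simp [liftSub, nenv, numeral_lift, numeral_sub]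

/-- bounded case analysis -/
theorem ball_pf {φ : AFml} {ρ : ℕ → ℕ} (t : ATerm)
    (h : ∀ a ≤ t.val ρ, Proves PA (φ.substAll (nenv (consEnv a ρ)))) :
    Proves PA (.imp (.le (.var 0) ((t.substAll (nenv ρ)).lift 0))
      (φ.substAll (liftSub (nenv ρ)))) := by
  have hl : (t.substAll (nenv ρ)).lift 0 = t.substAll (nenv ρ) := by
    rw [tlift_eq, tcomp]; congr 1; funext i; simp [nenv, numeral_sub]
  rw [hl]
  have h1 : Proves PA (.imp (disjT (.var 0) (t.val ρ)) (φ.substAll (liftSub (nenv ρ)))) := by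
    apply disjT_elim
    intro i hi
    have := Proves.eqSubst (Γ := PA) (φ.substAll (liftSub (nenv ρ))) (numeral i) (.var 0)
    rw [nenv_cons, nenv_var] at this
    exact tc3 this (h i hi) (eqSymm (.var 0) (numeral i)) fun v => by
      simp only [AFml.evalProp]; tauto
  exact tc4 h1 (le_disj (t.val ρ) (.var 0)) (leR (.var 0) _ _) (term_eval ρ t) fun v => by
      simp only [AFml.evalProp]; tauto

theorem delta0_dec {φ : AFml} (h : IsDelta0 φ) : ∀ ρ,
    (φ.Sat ρ → Proves PA (φ.substAll (nenv ρ))) ∧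
    (¬ φ.Sat ρ → Proves PA (.neg (φ.substAll (nenv ρ)))) := by
  induction h with
  | eq t s =>
    intro ρ
    have h1 := term_eval ρ t
    have h2 := term_eval ρ s
    constructor
    · intro h
      simp only [AFml.Sat] at h
      rw [h] at h1
      exact trans' h1 (symm' h2)
    · intro h
      have h3 := num_ne _ _ h
      exact tc4 h3 (eqTrans (numeral (t.val ρ)) (t.substAll (nenv ρ)) (s.substAll (nenv ρ)))
        (eqTrans (numeral (t.val ρ)) (s.substAll (nenv ρ)) (numeral (s.val ρ))) (tc2 (symm' h1) h2 (C := .and _ _)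
        fun v a b => ⟨a, b⟩) fun v => by
        simp only [AFml.evalProp, AFml.substAll]; tauto
  | le t s =>
    intro ρ
    have h1 := term_eval ρ t
    have h2 := term_eval ρ s
    constructor
    · intro h
      have h3 := num_le h
      exact .mp (.mp (leR _ _ _) (symm' h2)) (.mp (.mp (leL _ _ _) (symm' h1)) h3)
    · intro h
      have h3 := num_nle h
      exact tc4 h3 (leR (t.substAll (nenv ρ)) _ _) (leL (numeral (s.val ρ)) _ _)
        (tc2 h1 h2 (C := .and _ _) fun v a b => ⟨a, b⟩) fun v => by
        simp only [AFml.evalProp, AFml.substAll]; tauto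
  | neg _ ih =>
    intro ρ
    refine ⟨fun h => (ih ρ).2 h, fun h => ?_⟩
    exact tc1 ((ih ρ).1 (not_not.1 h)) fun v => by simp only [AFml.evalProp, AFml.substAll]; tauto
  | and _ _ ih1 ih2 =>
    intro ρ
    refine ⟨fun h => tc2 ((ih1 ρ).1 h.1) ((ih2 ρ).1 h.2) fun v a b => ⟨a, b⟩, fun h => ?_⟩
    simp only [AFml.Sat, not_and_or] at h
    rcases h with h | h
    · exact tc1 ((ih1 ρ).2 h) fun v => by simp only [AFml.evalProp, AFml.substAll]; tauto
    · exact tc1 ((ih2 ρ).2 h) fun v => by simp only [AFml.evalProp, AFml.substAll]; tauto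
  | or _ _ ih1 ih2 =>
    intro ρ
    refine ⟨fun h => ?_, fun h => ?_⟩
    · rcases h with h | h
      · exact tc1 ((ih1 ρ).1 h) fun v => by simp only [AFml.evalProp, AFml.substAll]; tauto
      · exact tc1 ((ih2 ρ).1 h) fun v => by simp only [AFml.evalProp, AFml.substAll]; tauto
    · simp only [AFml.Sat, not_or] at h
      exact tc2 ((ih1 ρ).2 h.1) ((ih2 ρ).2 h.2) fun v => by
        simp only [AFml.evalProp, AFml.substAll]; tauto
  | @imp φ ψ _ _ ih1 ih2 =>
    intro ρ
    refine ⟨fun h => ?_, fun h => ?_⟩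
    · by_cases h1 : φ.Sat ρ
      · exact tc1 ((ih2 ρ).1 (h h1)) fun v => by simp only [AFml.evalProp, AFml.substAll]; tauto
      · exact tc1 ((ih1 ρ).2 h1) fun v => by simp only [AFml.evalProp, AFml.substAll]; tauto
    · simp only [AFml.Sat, Classical.not_imp] at h
      exact tc2 ((ih1 ρ).1 h.1) ((ih2 ρ).2 h.2) fun v => by
        simp only [AFml.evalProp, AFml.substAll]; tauto
  | @ball φ t _ ih =>
    intro ρ
    simp only [AFml.Sat, AFml.substAll, lift_liftSub, val_lift]
    constructor
    · intro h
      exact .gen (ball_pf t fun a ha => (ih _).1 (h a ha))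
    · intro h
      push Not at h
      obtain ⟨a, ha, hn⟩ := h
      have h1 := (ih _).2 hn
      have h2 := Proves.allE (Γ := PA) (.imp (.le (.var 0) ((t.substAll (nenv ρ)).lift 0))
        (φ.substAll (liftSub (nenv ρ)))) (numeral a)
      have e : ∀ A B : AFml, (A.imp B).subst0 (numeral a) = (A.subst0 (numeral a)).imp
        (B.subst0 (numeral a)) := fun _ _ => rfl
      rw [e, nenv_cons] at h2
      simp only [AFml.subst0, AFml.substAll, ATerm.substAll, subst0Env, lift_subst0] at h2
      have h3 : Proves PA (.le (numeral a) (t.substAll (nenv ρ))) :=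
        .mp (.mp (leR _ _ _) (symm' (term_eval ρ t))) (num_le ha)
      exact tc3 h1 h2 h3 fun v => by simp only [AFml.evalProp]; tauto
  | @bex φ t _ ih =>
    intro ρ
    simp only [AFml.Sat, AFml.substAll, lift_liftSub, val_lift]
    constructor
    · rintro ⟨a, ha, hn⟩
      have h1 := (ih _).1 hn
      have h2 := Proves.exI (Γ := PA) (.and (.le (.var 0) ((t.substAll (nenv ρ)).lift 0))
        (φ.substAll (liftSub (nenv ρ)))) (numeral a)
      have e : ∀ A B : AFml, (A.and B).subst0 (numeral a) = (A.subst0 (numeral a)).and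
        (B.subst0 (numeral a)) := fun _ _ => rfl
      rw [e, nenv_cons] at h2
      simp only [AFml.subst0, AFml.substAll, ATerm.substAll, subst0Env, lift_subst0] at h2
      have h3 : Proves PA (.le (numeral a) (t.substAll (nenv ρ))) :=
        .mp (.mp (leR _ _ _) (symm' (term_eval ρ t))) (num_le ha)
      exact tc3 h1 h2 h3 fun v => by simp only [AFml.evalProp]; tauto
    · intro h
      push Not at h
      have := ball_pf (φ := .neg φ) t fun a ha => (ih _).2 (h a ha)
      have h1 : Proves PA (.all (.neg (.and (.le (.var 0) ((t.substAll (nenv ρ)).lift 0))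
        (φ.substAll (liftSub (nenv ρ)))))) :=
        .gen (tc1 this fun v => by simp only [AFml.evalProp, AFml.substAll]; tauto)
      exact tc2 h1 (.exDef _) fun v => by simp only [iffF, AFml.evalProp]; tauto

/-! ### The diagonal lemma -/

section diag
variable (φD P : AFml)

def Dt (x y z : ATerm) : AFml := φD.substAll (env3 x y z)

theorem Dt_sub (x y z : ATerm) (τ : ℕ → ATerm) :
    (Dt φD x y z).substAll τ = Dt φD (x.substAll τ) (y.substAll τ) (z.substAll τ) := by
  rw [Dt, fcomp, Dt]
  congr 1
  funext i
  rcases i with _ | _ | _ | i <;> rfl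

def Uq (x y z : ATerm) : AFml :=
  .all (.all (.imp (.le (.var 1) ((z.lift 0).lift 0)) (.imp (.le (.var 0) (.var 1))
    (.imp (Dt φD ((x.lift 0).lift 0) (.var 0) (.var 1)) (.eq (.var 0) ((y.lift 0).lift 0))))))

theorem Uq_sub (x y z : ATerm) (τ : ℕ → ATerm) :
    (Uq φD x y z).substAll τ = Uq φD (x.substAll τ) (y.substAll τ) (z.substAll τ) := by
  simp only [Uq, AFml.substAll, Dt_sub, lift_liftSub]
  rfl

def body (x y z : ATerm) : AFml :=
  .and (.and (.le y z) (Dt φD x y z)) (.and (Uq φD x y z) (.neg (P.substAll (fun _ => y))))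

theorem body_sub (x y z : ATerm) (τ : ℕ → ATerm) :
    (body φD P x y z).substAll τ = body φD P (x.substAll τ) (y.substAll τ) (z.substAll τ) := by
  simp only [body, AFml.substAll, Dt_sub, Uq_sub, fcomp]

def theta : AFml := .ex (.ex (body φD P (.var 2) (.var 0) (.var 1)))

theorem theta_free : (theta φD P).FreeLt 1 := by
  have e : ∀ (x y z : ATerm) c, x.FreeLt c → y.FreeLt c → z.FreeLt c →
      ∀ i, (env3 x y z i).FreeLt c := by
    intro x y z c hx hy hz i
    rcases i with _ | _ | _ | i
    exacts [hx, hy, hz, trivial]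
  have f : ∀ (i c : ℕ), i < c → (ATerm.var i).FreeLt c := fun i c h => h
  refine ⟨⟨⟨?_, ?_⟩, ?_⟩, ?_, ?_⟩
  · exact f _ _ (by omega)
  · exact f _ _ (by omega)
  · exact ffree_sub _ (e _ _ _ _ (f _ _ (by omega)) (f _ _ (by omega)) (f _ _ (by omega)))
  · refine ⟨⟨?_, ?_⟩, ⟨?_, ?_⟩, ?_, ?_, ?_⟩
    · exact f _ _ (by omega)
    · exact f _ _ (by simp)
    · exact f _ _ (by omega)
    · exact f _ _ (by omega)
    · exact ffree_sub _ (e _ _ _ _ (f _ _ (by simp)) (f _ _ (by omega)) (f _ _ (by omega)))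
    · exact f _ _ (by omega)
    · exact f _ _ (by simp)
  · exact ffree_sub _ fun _ => f _ _ (by omega)

theorem DtY (x z t s : ATerm) : Proves PA (.imp (.eq t s) (.imp (Dt φD x t z) (Dt φD x s z))) := by
  have := Proves.eqSubst (Γ := PA) (Dt φD (x.lift 0) (.var 0) (z.lift 0)) t s
  simp only [AFml.subst0, Dt_sub, lift_subst0] at this
  exact this

theorem DtZ (x y t s : ATerm) : Proves PA (.imp (.eq t s) (.imp (Dt φD x y t) (Dt φD x y s))) := by
  have := Proves.eqSubst (Γ := PA) (Dt φD (x.lift 0) (y.lift 0) (.var 0)) t s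
  simp only [AFml.subst0, Dt_sub, lift_subst0] at this
  exact this

theorem bodyX (y z t s : ATerm) :
    Proves PA (.imp (.eq t s) (.imp (body φD P t y z) (body φD P s y z))) := by
  have := Proves.eqSubst (Γ := PA) (body φD P (.var 0) (y.lift 0) (z.lift 0)) t s
  simp only [AFml.subst0, body_sub, lift_subst0] at this
  exact this

theorem PX (t s : ATerm) :
    Proves PA (.imp (.eq t s) (.imp (P.substAll (fun _ => t)) (P.substAll (fun _ => s)))) := by
  have := Proves.eqSubst (Γ := PA) (P.substAll (fun _ => .var 0)) t s
  simp only [AFml.subst0, fcomp] at this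
  exact this

theorem Uq_inst (x y z a b : ATerm) : Proves PA (.imp (Uq φD x y z) (.imp (.le a z)
    (.imp (.le b a) (.imp (Dt φD x b a) (.eq b y))))) := by
  have h1 := Proves.allE (Γ := PA) (.all (.imp (.le (.var 1) ((z.lift 0).lift 0))
    (.imp (.le (.var 0) (.var 1)) (.imp (Dt φD ((x.lift 0).lift 0) (.var 0) (.var 1))
      (.eq (.var 0) ((y.lift 0).lift 0)))))) a
  simp only [AFml.subst0, AFml.substAll, Dt_sub, lift_liftSub, lift_subst0] at h1
  have h2 := Proves.allE (Γ := PA) (.imp (.le (a.lift 0) (z.lift 0))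
    (.imp (.le (.var 0) (a.lift 0)) (.imp (Dt φD (x.lift 0) (.var 0) (a.lift 0))
      (.eq (.var 0) (y.lift 0))))) b
  simp only [AFml.subst0, AFml.substAll, Dt_sub, lift_subst0] at h2
  exact tc2 h1 h2 fun v p q r => q (p r)

theorem Dt_dec (hD : IsDelta0 φD) {D : ℕ → ℕ → ℕ → Prop}
    (hS : ∀ ρ, φD.Sat ρ ↔ D (ρ 0) (ρ 1) (ρ 2)) (a b c : ℕ) :
    (D a b c → Proves PA (Dt φD (numeral a) (numeral b) (numeral c))) ∧
    (¬ D a b c → Proves PA (.neg (Dt φD (numeral a) (numeral b) (numeral c)))) := by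
  let ρ : ℕ → ℕ := fun i => match i with
    | 0 => a
    | 1 => b
    | 2 => c
    | _ + 3 => 0
  have e : nenv ρ = env3 (numeral a) (numeral b) (numeral c) := by
    funext i
    rcases i with _ | _ | _ | i <;> rfl
  have h := delta0_dec hD ρ
  rw [hS ρ, e] at h
  exact h

theorem finchk (hD : IsDelta0 φD) {D : ℕ → ℕ → ℕ → Prop}
    (hS : ∀ ρ, φD.Sat ρ ↔ D (ρ 0) (ρ 1) (ρ 2)) (m g z0 : ℕ) (hu : ∀ y z, D m y z → y = g)
    (y z : ATerm) :
    Proves PA (.imp (.le z (numeral z0)) (.imp (.le y z)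
      (.imp (Dt φD (numeral m) y z) (.eq y (numeral g))))) := by
  have h1 : ∀ i, Proves PA (.imp (.le y (numeral i))
      (.imp (Dt φD (numeral m) y (numeral i)) (.eq y (numeral g)))) := by
    intro i
    have : Proves PA (.imp (disjT y i)
      (.imp (Dt φD (numeral m) y (numeral i)) (.eq y (numeral g)))) := by
      apply disjT_elim
      intro j hj
      by_cases h : D m j i
      · obtain rfl := hu _ _ h
        exact .taut fun v p q => p
      · exact tc2 ((Dt_dec φD hD hS m j i).2 h) (DtY φD (numeral m) (numeral i) y (numeral j))
          fun v => by simp only [AFml.evalProp]; tauto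
    exact tc2 this (le_disj i y) fun v p q r => p (q r)
  have h2 : Proves PA (.imp (disjT z z0) (.imp (.le y z)
      (.imp (Dt φD (numeral m) y z) (.eq y (numeral g))))) := by
    apply disjT_elim
    intro i hi
    exact tc3 (h1 i) (leR y z (numeral i)) (DtZ φD (numeral m) y z (numeral i))
      fun v a b c d e f => a (b d e) (c d f)
  exact tc2 h2 (le_disj z0 z) fun v p q r => p (q r)

end diag

theorem Rep.bounded {f : ℕ → ℕ} (hf : Rep f) : ∃ D : ℕ → ℕ → ℕ → Prop, Del3 D ∧
    (∀ x y z, D x y z → y = f x) ∧ ∀ x, ∃ z, f x ≤ z ∧ D x (f x) z := by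
  obtain ⟨D, hD, h⟩ := hf
  refine ⟨fun x y z => ∃ z1, z1 ≤ z ∧ D x y z1, ?_, ?_, ?_⟩
  · exact .bex (.v 2) (hD.sub (.v 1) (.v 2) (.v 0))
  · rintro x y z ⟨z1, -, h1⟩
    exact ((h x y).2 ⟨z1, h1⟩).symm
  · intro x
    obtain ⟨z1, h1⟩ := (h x _).1 rfl
    exact ⟨f x + z1, by omega, z1, by omega, h1⟩

theorem diagonal (P : AFml) (hP : P.FreeLt 1) (j : ℕ) : ∃ θ : AFml, θ.FreeLt 1 ∧
    Proves PA (iffF (diagF θ) (.neg (P.subst0 (numeral (gfun P j θ.code))))) := by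
  obtain ⟨D, ⟨φD, hD, hS⟩, hu, hex⟩ := (Rep.gfun P j).bounded
  refine ⟨theta φD P, theta_free φD P, ?_⟩
  have hcode : diagF (theta φD P) = .ex (.and (.eq (.var 0) (numeral (theta φD P).code))
    (theta φD P)) := rfl
  rw [hcode]
  generalize (theta φD P).code = m
  obtain ⟨z0, hle, hz0⟩ := hex m
  replace hu := hu m
  generalize gfun P j m = g at hz0 hu hle
  have hψ : P.subst0 (numeral g) = P.substAll (fun _ => numeral g) :=
    ffree_congr P (c := 1) (fun i hi => by obtain rfl : i = 0 := by omega
                                           rfl) hP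
  rw [hψ]
  have hψl : (P.substAll (fun _ => numeral g)).lift 0 = P.substAll (fun _ => numeral g) := by
    rw [flift_eq, fcomp]; simp only [numeral_sub]
  have hDt := (Dt_dec φD hD hS m g z0).1 hz0
  have hF := finchk φD hD hS m g z0 hu
  have fwd : ∀ y z : ATerm, Proves PA (.imp (body φD P (numeral m) y z)
      (.neg (P.substAll (fun _ => numeral g)))) := by
    intro y z
    have a : Proves PA (.imp (body φD P (numeral m) y z) (.eq (numeral g) y)) := by
      have b := tc3 (Uq_inst φD (numeral m) y z (numeral z0) (numeral g)) hDt (num_le hle)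
        (D := .imp (Uq φD (numeral m) y z) (.imp (.le (numeral z0) z) (.eq (numeral g) y)))
        fun v p q r s t => p s t r q
      refine tc4 b (hF y z) (le_total' z0 z) (eqSymm y (numeral g)) ?_
      intro v
      simp only [AFml.evalProp, body]
      tauto
    refine tc2 a (PX P (numeral g) y) ?_
    intro v
    simp only [AFml.evalProp, body]
    tauto
  have hbody : Proves PA (.imp (.neg (P.substAll (fun _ => numeral g)))
      (body φD P (numeral m) (numeral g) (numeral z0))) := by
    have hU : Proves PA (Uq φD (numeral m) (numeral g) (numeral z0)) := by
      refine .gen (.gen ?_)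
      simp only [numeral_lift]
      exact hF (.var 0) (.var 1)
    refine tc3 hU hDt (num_le hle) ?_
    intro v
    simp only [AFml.evalProp, body]
    tauto
  have dir1 : Proves PA (.imp (.ex (.and (.eq (.var 0) (numeral m)) (theta φD P)))
      (.neg (P.substAll (fun _ => numeral g)))) := by
    apply exE
    have : Proves PA (.imp (theta φD P) (.imp (.eq (.var 0) (numeral m))
        (.neg (P.substAll (fun _ => numeral g))))) := by
      apply exE
      apply exE
      simp only [AFml.lift, hψl, numeral_lift, ATerm.lift, Nat.not_lt_zero, if_false,
        Nat.reduceAdd]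
      exact tc2 (bodyX φD P (.var 0) (.var 1) (.var 2) (numeral m)) (fwd (.var 0) (.var 1))
        fun v p q r s => q (p s r)
    simp only [AFml.lift, hψl]
    exact tc1 this fun v p q => p q.2 q.1
  have dir2 : Proves PA (.imp (.neg (P.substAll (fun _ => numeral g)))
      (.ex (.and (.eq (.var 0) (numeral m)) (theta φD P)))) := by
    have e1 := Proves.exI (Γ := PA) (body φD P (numeral m) (.var 0) (numeral z0)) (numeral g)
    simp only [AFml.subst0, body_sub, numeral_sub] at e1
    have e2 := Proves.exI (Γ := PA) (.ex (body φD P (numeral m) (.var 0) (.var 1))) (numeral z0)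
    simp only [AFml.subst0, AFml.substAll, body_sub, numeral_sub, ATerm.substAll, liftSub,
      subst0Env, numeral_lift] at e2
    have e3 := Proves.exI (Γ := PA) (.and (.eq (.var 0) (numeral m)) (theta φD P)) (numeral m)
    simp only [theta, AFml.subst0, AFml.substAll, body_sub, numeral_sub, ATerm.substAll, liftSub,
      subst0Env, numeral_lift, ATerm.lift] at e3
    have e4 := tc3 hbody e1 e2 (D := .imp _ _) fun v p q r s => r (q (p s))
    exact tc3 e4 e3 (.eqRefl (numeral m)) fun v p q r s => q ⟨r, p s⟩
  exact tc2 dir1 dir2 fun v p q => ⟨p, q⟩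

/-- the interpretation sending every variable to `σ` -/
def interp (P σ : AFml) : MFml → AFml
  | .var _ => σ
  | .bot => botFml
  | .neg A => .neg (interp P σ A)
  | .and A B => .and (interp P σ A) (interp P σ B)
  | .or A B => .or (interp P σ A) (interp P σ B)
  | .imp A B => .imp (interp P σ A) (interp P σ B)
  | .box A => P.appNum (interp P σ A)

theorem interp_iter (P σ : AFml) (k : ℕ) :
    interp P σ (boxIter k (.var 0)) = iterPred P k σ := by
  induction k with
  | zero => rfl
  | succ k ih => simp only [boxIter, interp, iterPred, ih]

/-- For each `n ≥ 1`, there exists no provability predicate `PR_T(x)` of `T`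
such that `N⁺A_{0,n} ⊆ PL(PR_T)`. -/
theorem statement_2 (Tax : Set AFml) (hext : PA ⊆ Tax)
    (hcons : ¬ Proves Tax botFml) (hpr : PrAxiomatized Tax)
    (n : ℕ) (hn : 1 ≤ n) :
    ¬ ∃ P : AFml, IsProvPred Tax P ∧ {A : MFml | NAProves 0 n A} ⊆ PL Tax P := by
  rintro ⟨P, ⟨hP, hprov⟩, hsub⟩
  obtain ⟨j, rfl⟩ : ∃ j, n = j + 1 := ⟨n - 1, by omega⟩
  obtain ⟨θ, hθ, hdiag⟩ := diagonal P hP j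
  have hfix : Proves Tax (iffF (diagF θ) (.neg (iterPred P (j + 1) (diagF θ)))) := by
    have h := hdiag.mono hext
    rw [gfun_spec] at h
    exact h
  have hfree : (diagF θ).FreeLt 0 := ⟨⟨Nat.zero_lt_one, numeral_free _ _⟩, hθ⟩
  have hax : Proves Tax (.imp (iterPred P (j + 1) (diagF θ)) (diagF θ)) := by
    have h := hsub (NAProves.acc (m := 0) (n := j + 1) (.var 0)) (interp P (diagF θ))
      ⟨fun _ => hfree, rfl, fun _ => rfl, fun _ _ => rfl, fun _ _ => rfl, fun _ _ => rfl,
        fun _ => rfl⟩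
    simp only [interp, interp_iter, boxIter] at h
    exact h
  have hσ : Proves Tax (diagF θ) := tc2 hfix hax fun v p q => by
    simp only [iffF, AFml.evalProp] at p q
    tauto
  have hit : ∀ k, Proves Tax (iterPred P k (diagF θ)) := by
    intro k
    induction k with
    | zero => exact hσ
    | succ k ih => exact ((hprov _).1 ih).mono hext
  exact hcons (tc3 hfix hσ (hit (j + 1)) fun v p q r => absurd r (p.1 q))

end PLN
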